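/- arXiv:2510.03040 — 2 statements merged into one kernel-verified Lean document; each statement's English description precedes it below -/
import Mathlib

section
/- Let ℛ = (𝒜^{(0)}, (ℬ^{(n)})_{n≥1}) be a renormalization scheme of dimension d ≥ 2 associated to (λ₀,μ,σ), and assume Condition (C1) holds. Let n ≥ m ≥ 1 be integers and let γ = (u₁,…,u_k) be a nearest-neighbor path of points of 𝕃_m (i.e. ‖u_i − u_{i+1}‖₁ = λ_m for 1 ≤ i ≤ k−1) all of which are good up to scale n. Then there exists a nearest-neighbor path γ̃ = (v₁,…,v_l) of points of 𝕃_{m−1} such that v₁ ∈ Λ_m(u₁), v_l ∈ Λ_m(u_k), and every v_i is good up to scale n. -/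
open MeasureTheory ProbabilityTheory Set

noncomputable section

/-- The scale sequence `λ_0 = lam0`, `λ_{n+1} = λ_n μ_n`. -/
def lamSeq (lam0 : ℕ) (μ : ℕ → ℕ) : ℕ → ℕ
  | 0 => lam0
  | n + 1 => lamSeq lam0 μ n * μ n

/-- The lattice `𝕃 = L ℤ^d` inside `ℤ^d`. -/
def latt (d L : ℕ) : Set (Fin d → ℤ) := {u | ∀ i, (L : ℤ) ∣ u i}

/-- Sup norm on `ℤ^d`. -/
def normInfV {d : ℕ} (v : Fin d → ℤ) : ℕ := Finset.univ.sup fun i => (v i).natAbs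

/-- ℓ¹ norm on `ℤ^d`. -/
def norm1V {d : ℕ} (v : Fin d → ℤ) : ℕ := ∑ i, (v i).natAbs

/-- `Λ_n(u) = (u + [0, λ_n)^d) ∩ 𝕃_{n-1}`. -/
def lamBox {d : ℕ} (lam0 : ℕ) (μ : ℕ → ℕ) (n : ℕ) (u : Fin d → ℤ) : Set (Fin d → ℤ) :=
  {v | v ∈ latt d (lamSeq lam0 μ (n - 1)) ∧
    ∀ i, u i ≤ v i ∧ v i < u i + (lamSeq lam0 μ n : ℤ)}

/-- A renormalization scheme: a collection of seed events (indexed by `𝕃₀`)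
and of auxiliary events (indexed by `𝕃_n`, `n ≥ 1`). -/
structure RenormScheme (Ω : Type*) (d : ℕ) where
  seed : (Fin d → ℤ) → Set Ω
  aux : ℕ → (Fin d → ℤ) → Set Ω

/-- The recursively defined events `𝒜^{(n)}_u` of a renormalization scheme. -/
def Aev {Ω : Type*} {d : ℕ} (lam0 : ℕ) (μ σ : ℕ → ℕ) (S : RenormScheme Ω d) :
    ℕ → (Fin d → ℤ) → Set Ω
  | 0, u => S.seed u
  | n + 1, u =>
    S.aux (n + 1) u ∩
      ⋂ (u₁ : Fin d → ℤ) (u₂ : Fin d → ℤ) (_ : u₁ ∈ lamBox lam0 μ (n + 1) u)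
        (_ : u₂ ∈ lamBox lam0 μ (n + 1) u)
        (_ : 5 * σ n * lamSeq lam0 μ n ≤ normInfV (u₁ - u₂)),
        (Aev lam0 μ σ S n u₁ ∪ Aev lam0 μ σ S n u₂)

/-- Condition (C1): `μ_n ≥ 100 σ_n` and `σ_n ≥ 2`. -/
def Cond1 (μ σ : ℕ → ℕ) : Prop := ∀ n, 100 * σ n ≤ μ n ∧ 2 ≤ σ n

/-- The unique point `w ∈ Lℤ^d` with `v ∈ w + [0, L)^d`. -/
def parentV {d : ℕ} (L : ℕ) (v : Fin d → ℤ) : Fin d → ℤ :=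
  fun i => (L : ℤ) * (Int.ediv (v i) (L : ℤ))

/-- The renormalization sequence of `u ∈ 𝕃_m`: `renSeq lam0 μ m u j ∈ 𝕃_{m+j}`. -/
def renSeq {d : ℕ} (lam0 : ℕ) (μ : ℕ → ℕ) (m : ℕ) (u : Fin d → ℤ) : ℕ → (Fin d → ℤ)
  | 0 => u
  | j + 1 => parentV (lamSeq lam0 μ (m + j + 1)) (renSeq lam0 μ m u j)

/-- The event that `u ∈ 𝕃_m` is good up to scale `n`. -/
def GoodUpTo {Ω : Type*} {d : ℕ} (lam0 : ℕ) (μ σ : ℕ → ℕ) (S : RenormScheme Ω d)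
    (m n : ℕ) (u : Fin d → ℤ) : Set Ω :=
  ⋂ k ∈ Finset.Icc m n, Aev lam0 μ σ S k (renSeq lam0 μ m u (k - m))

/-- The box `u + [-r, r]^d ⊆ ℝ^d` (formal support of seed and auxiliary events). -/
def suppBox {d : ℕ} (u : Fin d → ℤ) (r : ℕ) : Set (Fin d → ℝ) :=
  {x | ∀ i, |x i - (u i : ℝ)| ≤ (r : ℝ)}

/-- The sub-collection of seed and auxiliary events whose formal support is contained
in `D`. -/
def schemeEventsIn {Ω : Type*} {d : ℕ} (lam0 : ℕ) (μ σ : ℕ → ℕ) (S : RenormScheme Ω d)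
    (D : Set (Fin d → ℝ)) : Set (Set Ω) :=
  {E | (∃ u ∈ latt d (lamSeq lam0 μ 0), E = S.seed u ∧
          suppBox u (σ 0 * lamSeq lam0 μ 0) ⊆ D) ∨
       (∃ n : ℕ, 1 ≤ n ∧ ∃ u ∈ latt d (lamSeq lam0 μ n), E = S.aux n u ∧
          suppBox u (σ n * lamSeq lam0 μ n) ⊆ D)}

/-- Condition (C2): collections of seed/auxiliary events with disjoint formal supports
are independent. -/
def Cond2 {Ω : Type*} [MeasureSpace Ω] {d : ℕ} (lam0 : ℕ) (μ σ : ℕ → ℕ)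
    (S : RenormScheme Ω d) : Prop :=
  ∀ D₁ D₂ : Set (Fin d → ℝ), Disjoint D₁ D₂ →
    ProbabilityTheory.Indep
      (MeasurableSpace.generateFrom (schemeEventsIn lam0 μ σ S D₁))
      (MeasurableSpace.generateFrom (schemeEventsIn lam0 μ σ S D₂)) ℙ


lemma lamSeq_pos12 {lam0 : ℕ} {μ : ℕ → ℕ} (h0 : 0 < lam0) (hμ : ∀ n, 0 < μ n) (n : ℕ) :
    0 < lamSeq lam0 μ n := by
  induction n with
  | zero => exact h0
  | succ n ih => exact Nat.mul_pos ih (hμ n)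

/-- Walking along one coordinate. -/
lemma walk_coord12 {d : ℕ} (R : (Fin d → ℤ) → (Fin d → ℤ) → Prop)
    (hsymm : ∀ x y, R x y → R y x) (M : ℤ) (z : Fin d → ℤ) (j : Fin d)
    (hR : ∀ c, 0 ≤ c → c + 1 < M → R (Function.update z j c) (Function.update z j (c + 1)))
    (a b : ℤ) (ha : 0 ≤ a) (haM : a < M) (hb : 0 ≤ b) (hbM : b < M) :
    Relation.ReflTransGen R (Function.update z j a) (Function.update z j b) := by
  have key : ∀ a b : ℤ, 0 ≤ a → a ≤ b → b < M →
      Relation.ReflTransGen R (Function.update z j a) (Function.update z j b) := by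
    intro a b ha hab
    induction b, hab using Int.leInduction with
    | base => intro _; exact Relation.ReflTransGen.refl
    | succ b hab ih =>
      intro hb
      exact (ih (by omega)).tail (hR b (by omega) hb)
  rcases le_total a b with h | h
  · exact key a b ha h hbM
  · have : Std.Symm R := ⟨hsymm⟩
    exact symm (key b a hb h haM)

/-- All points having a free coordinate are connected to a totally free point. -/
lemma walk_center12 {d : ℕ} (hd : 2 ≤ d) (R : (Fin d → ℤ) → (Fin d → ℤ) → Prop)
    (hsymm : ∀ x y, R x y → R y x) (M : ℤ) (F : Fin d → ℤ → Prop)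
    (hR : ∀ (z : Fin d → ℤ) (j i : Fin d) (c : ℤ), i ≠ j → F i (z i) →
      (∀ l, 0 ≤ z l ∧ z l < M) → 0 ≤ c → c + 1 < M →
      R (Function.update z j c) (Function.update z j (c + 1)))
    (t x : Fin d → ℤ) (ht : ∀ l, 0 ≤ t l ∧ t l < M) (hx : ∀ l, 0 ≤ x l ∧ x l < M)
    (hF : ∀ l, F l (t l)) (i : Fin d) (hxi : F i (x i)) :
    Relation.ReflTransGen R x t := by
  have hbox : ∀ T : Finset (Fin d), ∀ l, 0 ≤ T.piecewise t x l ∧ T.piecewise t x l < M := by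
    intro T l
    by_cases h : l ∈ T
    · rw [Finset.piecewise_eq_of_mem _ _ _ h]; exact ht l
    · rw [Finset.piecewise_eq_of_notMem _ _ _ h]; exact hx l
  have step : ∀ (T : Finset (Fin d)) (j i' : Fin d), i' ≠ j → F i' (T.piecewise t x i') →
      Relation.ReflTransGen R (T.piecewise t x) ((insert j T).piecewise t x) := by
    intro T j i' hij hFi
    rw [Finset.piecewise_insert]
    have := walk_coord12 R hsymm M (T.piecewise t x) j
      (fun c hc hc' => hR _ j i' c hij hFi (hbox T) hc hc')
      (T.piecewise t x j) (t j) (hbox T j).1 (hbox T j).2 (ht j).1 (ht j).2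
    rwa [Function.update_eq_self] at this
  have h1 : ∀ T : Finset (Fin d), i ∉ T → Relation.ReflTransGen R x (T.piecewise t x) := by
    intro T
    induction T using Finset.induction_on with
    | empty => intro _; rw [Finset.piecewise_empty]
    | insert j T hj ih =>
      intro hi
      rw [Finset.mem_insert, not_or] at hi
      refine (ih hi.2).trans (step T j i hi.1 ?_)
      rw [Finset.piecewise_eq_of_notMem _ _ _ hi.2]; exact hxi
  obtain ⟨j, hj⟩ : ∃ j : Fin d, j ≠ i := by
    have : Nontrivial (Fin d) := Fin.nontrivial_iff_two_le.mpr hd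
    exact exists_ne i
  have h2 := h1 (Finset.univ.erase i) (by simp)
  have h3 := step (Finset.univ.erase i) i j hj (by
    rw [Finset.piecewise_eq_of_mem _ _ _ (by simp [hj])]; exact hF j)
  rw [Finset.insert_erase (Finset.mem_univ i), Finset.piecewise_univ] at h3
  exact h2.trans h3

/-- Embedding of the unit grid into the box based at `u`. -/
def phi12 {d : ℕ} (L : ℕ) (u z : Fin d → ℤ) : Fin d → ℤ := fun i => u i + (L : ℤ) * z i

lemma norm1V_symm12 {d : ℕ} (x y : Fin d → ℤ) : norm1V (x - y) = norm1V (y - x) := by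
  unfold norm1V
  refine Finset.sum_congr rfl fun i _ => ?_
  simp only [Pi.sub_apply]; omega

lemma norm1V_single12 {d : ℕ} (x y : Fin d → ℤ) (j : Fin d) (L : ℕ)
    (h : ∀ i, i ≠ j → x i = y i) (hj : y j = x j + L) : norm1V (x - y) = L := by
  unfold norm1V
  rw [Finset.sum_eq_single j]
  · simp [hj]
  · intro i _ hi; simp [h i hi]
  · simp

lemma phi12_mem {d : ℕ} {lam0 : ℕ} {μ : ℕ → ℕ} (h0 : 0 < lam0) (hμ : ∀ n, 0 < μ n) (p : ℕ)
    (u z : Fin d → ℤ) (hu : u ∈ latt d (lamSeq lam0 μ (p + 1)))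
    (hz : ∀ l, 0 ≤ z l ∧ z l < (μ p : ℤ)) :
    phi12 (lamSeq lam0 μ p) u z ∈ lamBox lam0 μ (p + 1) u := by
  have hL : (0 : ℤ) < lamSeq lam0 μ p := by exact_mod_cast lamSeq_pos12 h0 hμ p
  refine ⟨fun i => ?_, fun i => ?_⟩
  · have h1 : ((lamSeq lam0 μ p : ℕ) : ℤ) ∣ u i :=
      Dvd.dvd.trans (by simp [lamSeq]) (hu i)
    exact dvd_add h1 (dvd_mul_right _ _)
  · simp only [phi12, lamSeq]
    push_cast
    have := hz i
    constructor
    · nlinarith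
    · nlinarith

lemma renSeq_box12 {d : ℕ} {lam0 : ℕ} {μ : ℕ → ℕ} (h0 : 0 < lam0) (hμ : ∀ n, 0 < μ n) (p : ℕ)
    (u v : Fin d → ℤ) (hu : u ∈ latt d (lamSeq lam0 μ (p + 1)))
    (hv : v ∈ lamBox lam0 μ (p + 1) u) (j : ℕ) :
    renSeq lam0 μ p v (j + 1) = renSeq lam0 μ (p + 1) u j := by
  induction j with
  | zero =>
    funext i
    have hL : (0 : ℤ) < lamSeq lam0 μ (p + 1) := by exact_mod_cast lamSeq_pos12 h0 hμ (p + 1)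
    change ((lamSeq lam0 μ (p + 1) : ℕ) : ℤ) * (v i / ((lamSeq lam0 μ (p + 1) : ℕ) : ℤ)) = u i
    obtain ⟨c, hc⟩ := hu i
    have h := hv.2 i
    generalize ((lamSeq lam0 μ (p + 1) : ℕ) : ℤ) = K at *
    have : v i / K = c := by
      rw [Int.ediv_eq_iff_of_pos hL]
      constructor <;> nlinarith
    rw [this, hc]
  | succ j ih =>
    rw [renSeq, ih]
    conv_rhs => rw [renSeq]
    congr 2
    omega

lemma good_box12 {Ω : Type*} {d : ℕ} {lam0 : ℕ} {μ σ : ℕ → ℕ} {S : RenormScheme Ω d}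
    (h0 : 0 < lam0) (hμ : ∀ n, 0 < μ n) (p n : ℕ)
    (u v : Fin d → ℤ) (hu : u ∈ latt d (lamSeq lam0 μ (p + 1)))
    (hv : v ∈ lamBox lam0 μ (p + 1) u) (ω : Ω)
    (hg : ω ∈ GoodUpTo lam0 μ σ S (p + 1) n u) (hA : ω ∈ Aev lam0 μ σ S p v) :
    ω ∈ GoodUpTo lam0 μ σ S p n v := by
  simp only [GoodUpTo, Set.mem_iInter, Finset.mem_Icc] at hg ⊢
  intro k hk
  rcases Nat.eq_or_lt_of_le hk.1 with h | h
  · subst h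
    simpa [renSeq] using hA
  · have h1 := hg k ⟨h, hk.2⟩
    have h2 : k - p = (k - (p + 1)) + 1 := by omega
    rw [h2, renSeq_box12 h0 hμ p u v hu hv]
    exact h1

/-- In a good box, all points having one coordinate far from some fixed point are good. -/
lemma exists_far12 {Ω : Type*} {d : ℕ} {lam0 : ℕ} {μ σ : ℕ → ℕ} {S : RenormScheme Ω d}
    (h0 : 0 < lam0) (hμ : ∀ n, 0 < μ n) (p n : ℕ) (hn : p + 1 ≤ n)
    (u : Fin d → ℤ) (hu : u ∈ latt d (lamSeq lam0 μ (p + 1))) (ω : Ω)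
    (hg : ω ∈ GoodUpTo lam0 μ σ S (p + 1) n u) :
    ∃ a : Fin d → ℤ, ∀ z : Fin d → ℤ, (∀ l, 0 ≤ z l ∧ z l < (μ p : ℤ)) →
      ∀ i, 5 * (σ p : ℤ) ≤ |z i - a i| →
        ω ∈ GoodUpTo lam0 μ σ S p n (phi12 (lamSeq lam0 μ p) u z) := by
  have hAu : ω ∈ Aev lam0 μ σ S (p + 1) u := by
    have h := hg
    simp only [GoodUpTo, Set.mem_iInter, Finset.mem_Icc] at h
    simpa [renSeq] using h (p + 1) ⟨le_rfl, hn⟩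
  by_cases hb : ∃ a : Fin d → ℤ, (∀ l, 0 ≤ a l ∧ a l < (μ p : ℤ)) ∧
      ω ∉ Aev lam0 μ σ S p (phi12 (lamSeq lam0 μ p) u a)
  · obtain ⟨a, ha, hbad⟩ := hb
    refine ⟨a, fun z hz i hi => ?_⟩
    have hmz := phi12_mem h0 hμ p u z hu hz
    have hma := phi12_mem h0 hμ p u a hu ha
    refine good_box12 h0 hμ p n u _ hu hmz ω hg ?_
    rw [Aev] at hAu
    have h2 := hAu.2
    simp only [Set.mem_iInter] at h2
    have hd : 5 * σ p * lamSeq lam0 μ p ≤ normInfV (phi12 (lamSeq lam0 μ p) u z -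
        phi12 (lamSeq lam0 μ p) u a) := by
      refine le_trans ?_ (Finset.le_sup (f := fun i => ((phi12 (lamSeq lam0 μ p) u z -
        phi12 (lamSeq lam0 μ p) u a) i).natAbs) (Finset.mem_univ i))
      have e : (phi12 (lamSeq lam0 μ p) u z - phi12 (lamSeq lam0 μ p) u a) i =
          (z i - a i) * (lamSeq lam0 μ p : ℤ) := by
        simp only [phi12, Pi.sub_apply]; ring
      simp only [e, Int.natAbs_mul, Int.natAbs_natCast]
      exact Nat.mul_le_mul_right _ (by rw [le_abs] at hi; omega)
    exact (h2 _ _ hmz hma hd).resolve_right hbad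
  · push Not at hb
    exact ⟨0, fun z hz i _ => good_box12 h0 hμ p n u _ hu (phi12_mem h0 hμ p u z hu hz) ω hg
      (hb z hz)⟩

lemma exists_free12 (s M a b : ℤ) (hs : 2 ≤ s) (hM : 100 * s ≤ M) :
    ∃ c, 0 ≤ c ∧ c < M ∧ 5 * s ≤ |c - a| ∧ 5 * s ≤ |c - b| := by
  by_contra! h
  have h1 := h 0 (by omega) (by omega)
  have h2 := h (10 * s) (by omega) (by omega)
  have h3 := h (20 * s) (by omega) (by omega)
  simp only [le_abs, abs_lt] at h1 h2 h3
  omega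

/-- The step relation on good points. -/
def Rel12 {d : ℕ} (L : ℕ) (G : (Fin d → ℤ) → Prop) (x y : Fin d → ℤ) : Prop :=
  norm1V (x - y) = L ∧ G x ∧ G y

lemma Rel12_symm {d : ℕ} (L : ℕ) (G : (Fin d → ℤ) → Prop) (x y : Fin d → ℤ)
    (h : Rel12 L G x y) : Rel12 L G y x :=
  ⟨by rw [norm1V_symm12]; exact h.1, h.2.2, h.2.1⟩

/-- Connection to the center within one box. -/
lemma box_conn12 {d : ℕ} (hd : 2 ≤ d) (L : ℕ) (G : (Fin d → ℤ) → Prop) (M s : ℤ)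
    (u a : Fin d → ℤ)
    (hG : ∀ z : Fin d → ℤ, (∀ l, 0 ≤ z l ∧ z l < M) → ∀ i, 5 * s ≤ |z i - a i| →
      G (phi12 L u z))
    (t x : Fin d → ℤ) (ht : ∀ l, 0 ≤ t l ∧ t l < M) (hx : ∀ l, 0 ≤ x l ∧ x l < M)
    (hF : ∀ l, 5 * s ≤ |t l - a l|) (i : Fin d) (hxi : 5 * s ≤ |x i - a i|) :
    Relation.ReflTransGen (Rel12 L G) (phi12 L u x) (phi12 L u t) := by
  have h := walk_center12 hd (fun x y => Rel12 L G (phi12 L u x) (phi12 L u y))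
    (fun x y h => Rel12_symm L G _ _ h) M (fun i c => 5 * s ≤ |c - a i|) ?_ t x ht hx hF i hxi
  · exact h.lift (phi12 L u) (fun _ _ h => h)
  · intro z j i c hij hi hz hc hc'
    have hup : ∀ c', 0 ≤ c' → c' < M → G (phi12 L u (Function.update z j c')) := by
      intro c' h1 h2
      refine hG _ (fun l => ?_) i (by rwa [Function.update_of_ne hij])
      by_cases hl : l = j
      · subst hl; simpa using ⟨h1, h2⟩
      · rw [Function.update_of_ne hl]; exact hz l
    refine ⟨norm1V_single12 _ _ j L (fun l hl => ?_) ?_, hup c hc (by omega),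
      hup (c + 1) (by omega) hc'⟩
    · simp [phi12, Function.update_of_ne hl]
    · simp [phi12]; ring

/-- Crossing from a box to the next one in direction `j`. -/
lemma cross_conn12 {d : ℕ} (hd : 2 ≤ d) (L : ℕ) (G : (Fin d → ℤ) → Prop) (M s : ℤ)
    (hs : 2 ≤ s) (hM : 100 * s ≤ M) (u a u' a' : Fin d → ℤ)
    (hG : ∀ z : Fin d → ℤ, (∀ l, 0 ≤ z l ∧ z l < M) → ∀ i, 5 * s ≤ |z i - a i| →
      G (phi12 L u z))
    (hG' : ∀ z : Fin d → ℤ, (∀ l, 0 ≤ z l ∧ z l < M) → ∀ i, 5 * s ≤ |z i - a' i| →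
      G (phi12 L u' z))
    (j : Fin d) (hne : ∀ i, i ≠ j → u i = u' i) (hj : u' j = u j + L * M)
    (t t' : Fin d → ℤ) (ht : ∀ l, 0 ≤ t l ∧ t l < M) (ht' : ∀ l, 0 ≤ t' l ∧ t' l < M)
    (hF : ∀ l, 5 * s ≤ |t l - a l|) (hF' : ∀ l, 5 * s ≤ |t' l - a' l|) :
    Relation.ReflTransGen (Rel12 L G) (phi12 L u t) (phi12 L u' t') := by
  choose c hc0 hcM hca hca' using fun l => exists_free12 s M (a l) (a' l) hs hM
  obtain ⟨i, hi⟩ : ∃ i : Fin d, i ≠ j := by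
    have : Nontrivial (Fin d) := Fin.nontrivial_iff_two_le.mpr hd
    exact exists_ne j
  have hbox : ∀ e, 0 ≤ e → e < M →
      ∀ l, 0 ≤ Function.update c j e l ∧ Function.update c j e l < M := by
    intro e h1 h2 l
    by_cases hl : l = j
    · subst hl; simpa using ⟨h1, h2⟩
    · rw [Function.update_of_ne hl]; exact ⟨hc0 l, hcM l⟩
  have b1 := hbox (M - 1) (by omega) (by omega)
  have b2 := hbox 0 (by omega) (by omega)
  have f1 : 5 * s ≤ |Function.update c j (M - 1) i - a i| := by
    rw [Function.update_of_ne hi]; exact hca i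
  have f2 : 5 * s ≤ |Function.update c j 0 i - a' i| := by
    rw [Function.update_of_ne hi]; exact hca' i
  have c1 := box_conn12 hd L G M s u a hG t _ ht b1 hF i f1
  have c2 := box_conn12 hd L G M s u' a' hG' t' _ ht' b2 hF' i f2
  have hS : Std.Symm (Rel12 L G) := ⟨Rel12_symm L G⟩
  refine (symm c1 : Relation.ReflTransGen (Rel12 L G) _ _).trans
    (Relation.ReflTransGen.head ?_ c2)
  refine ⟨norm1V_single12 _ _ j L (fun l hl => ?_) ?_, hG _ b1 i f1, hG' _ b2 i f2⟩
  · simp [phi12, Function.update_of_ne hl, hne l hl]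
  · simp [phi12, hj]; ring

lemma neighbor12 {d : ℕ} (K : ℕ) (hK : 0 < K) (u v : Fin d → ℤ) (hu : u ∈ latt d K)
    (hv : v ∈ latt d K) (h : norm1V (u - v) = K) :
    ∃ j, (∀ i, i ≠ j → u i = v i) ∧ (v j = u j + K ∨ u j = v j + K) := by
  have hex : ∃ j, u j - v j ≠ 0 := by
    by_contra! hc
    have : norm1V (u - v) = 0 := by
      unfold norm1V
      exact Finset.sum_eq_zero fun i _ => by simp [hc i]
    omega
  obtain ⟨j, hj⟩ := hex
  have hle : K ≤ (u j - v j).natAbs :=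
    Nat.le_of_dvd (by omega) (Int.natCast_dvd.mp (dvd_sub (hu j) (hv j)))
  unfold norm1V at h
  rw [← Finset.add_sum_erase _ _ (Finset.mem_univ j)] at h
  simp only [Pi.sub_apply] at h
  refine ⟨j, fun i hi => ?_, by omega⟩
  have h0 : ∑ x ∈ Finset.univ.erase j, (u x - v x).natAbs = 0 := by omega
  have := (Finset.sum_eq_zero_iff.mp h0) i (by simp [hi])
  omega

lemma path_of_conn12 {V : Type*} (R : V → V → Prop) (x y : V) (h : Relation.ReflTransGen R x y) :
    ∃ (l : ℕ) (g : ℕ → V), g 0 = x ∧ g l = y ∧ ∀ j, j < l → R (g j) (g (j + 1)) := by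
  induction h with
  | refl => exact ⟨0, fun _ => x, rfl, rfl, fun j hj => absurd hj (by omega)⟩
  | tail _ hbc ih =>
    rename_i b c _
    obtain ⟨l, g, h0, hl, hg⟩ := ih
    refine ⟨l + 1, fun j => if j ≤ l then g j else c, by simp [h0], by simp, fun j hj => ?_⟩
    rcases Nat.lt_or_ge j l with h | h
    · simp only [if_pos h.le, if_pos (show j + 1 ≤ l by omega)]; exact hg j h
    · obtain rfl : j = l := by omega
      simp [hl, hbc]

theorem stmt12 {Ω : Type*} (d : ℕ) (hd : 2 ≤ d) (lam0 : ℕ) (hlam0 : 0 < lam0)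
    (μ σ : ℕ → ℕ) (hμ : ∀ n, 0 < μ n) (hσ : ∀ n, 0 < σ n) (hC1 : Cond1 μ σ)
    (S : RenormScheme Ω d) (m n : ℕ) (hm : 1 ≤ m) (hmn : m ≤ n)
    (k : ℕ) (hk : 1 ≤ k) (γ : Fin k → Fin d → ℤ)
    (hmem : ∀ i, γ i ∈ latt d (lamSeq lam0 μ m))
    (hpath : ∀ (i : ℕ) (h : i + 1 < k),
      norm1V (γ ⟨i, by omega⟩ - γ ⟨i + 1, h⟩) = lamSeq lam0 μ m)
    (ω : Ω) (hgood : ∀ i, ω ∈ GoodUpTo lam0 μ σ S m n (γ i)) :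
    ∃ l : ℕ, ∃ hl : 1 ≤ l, ∃ γ' : Fin l → Fin d → ℤ,
      γ' ⟨0, by omega⟩ ∈ lamBox lam0 μ m (γ ⟨0, by omega⟩) ∧
      γ' ⟨l - 1, by omega⟩ ∈ lamBox lam0 μ m (γ ⟨k - 1, by omega⟩) ∧
      (∀ (j : ℕ) (h : j + 1 < l),
        norm1V (γ' ⟨j, by omega⟩ - γ' ⟨j + 1, h⟩) = lamSeq lam0 μ (m - 1)) ∧
      (∀ j : Fin l, ω ∈ GoodUpTo lam0 μ σ S (m - 1) n (γ' j)) := by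
  obtain ⟨p, rfl⟩ : ∃ p, m = p + 1 := ⟨m - 1, by omega⟩
  have hs : (2 : ℤ) ≤ σ p := by exact_mod_cast (hC1 p).2
  have hM : 100 * (σ p : ℤ) ≤ μ p := by exact_mod_cast (hC1 p).1
  choose a ha using fun i => exists_far12 hlam0 hμ p n hmn (γ i) (hmem i) ω (hgood i)
  choose t ht0 htM hta _ using fun i l =>
    exists_free12 (σ p : ℤ) (μ p : ℤ) (a i l) (a i l) hs hM
  have htb : ∀ i l, 0 ≤ t i l ∧ t i l < (μ p : ℤ) := fun i l => ⟨ht0 i l, htM i l⟩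
  set L := lamSeq lam0 μ p with hL
  set G : (Fin d → ℤ) → Prop := fun v => ω ∈ GoodUpTo lam0 μ σ S p n v with hG
  have hstep : ∀ (i : ℕ) (h : i + 1 < k), Relation.ReflTransGen (Rel12 L G)
      (phi12 L (γ ⟨i, by omega⟩) (t ⟨i, by omega⟩))
      (phi12 L (γ ⟨i + 1, h⟩) (t ⟨i + 1, h⟩)) := by
    intro i h
    obtain ⟨j, hne, hj⟩ := neighbor12 _ (lamSeq_pos12 hlam0 hμ (p + 1)) _ _
      (hmem ⟨i, by omega⟩) (hmem ⟨i + 1, h⟩) (hpath i h)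
    have hK : ((lamSeq lam0 μ (p + 1) : ℕ) : ℤ) = L * μ p := by simp [lamSeq, hL]
    rw [hK] at hj
    rcases hj with hj | hj
    · exact cross_conn12 hd L G _ _ hs hM _ _ _ _ (ha _) (ha _) j hne hj _ _
        (htb _) (htb _) (hta _) (hta _)
    · have hS : Std.Symm (Rel12 L G) := ⟨Rel12_symm L G⟩
      exact symm (cross_conn12 hd L G _ _ hs hM _ _ _ _ (ha _) (ha _) j
        (fun i hi => (hne i hi).symm) hj _ _ (htb _) (htb _) (hta _) (hta _))
  have hconn : ∀ (i : ℕ) (h : i < k), Relation.ReflTransGen (Rel12 L G)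
      (phi12 L (γ ⟨0, by omega⟩) (t ⟨0, by omega⟩)) (phi12 L (γ ⟨i, h⟩) (t ⟨i, h⟩)) := by
    intro i
    induction i with
    | zero => intro h; exact Relation.ReflTransGen.refl
    | succ i ih => intro h; exact (ih (by omega)).trans (hstep i h)
  obtain ⟨l, g, g0, gl, hg⟩ := path_of_conn12 _ _ _ (hconn (k - 1) (by omega))
  have hmemb : ∀ i, phi12 L (γ i) (t i) ∈ lamBox lam0 μ (p + 1) (γ i) :=
    fun i => phi12_mem hlam0 hμ p _ _ (hmem i) (htb i)
  refine ⟨l + 1, by omega, fun j => g j, ?_, ?_, ?_, ?_⟩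
  · change g 0 ∈ _
    rw [g0]; exact hmemb _
  · change g l ∈ _
    rw [gl]; exact hmemb _
  · intro j h
    exact (hg j (by omega)).1
  · rintro ⟨j, hj⟩
    change G (g j)
    rcases Nat.eq_zero_or_pos j with h | h
    · subst h
      rw [g0]
      exact ha _ _ (htb _) ⟨0, by omega⟩ (hta _ _)
    · obtain ⟨j, rfl⟩ : ∃ j', j = j' + 1 := ⟨j - 1, by omega⟩
      exact (hg j (by omega)).2.2

end
end

section
/- Let ℛ = (𝒜^{(0)}, (ℬ^{(n)})_{n≥1}) be a renormalization scheme of dimension d ≥ 2 associated to (λ₀,μ,σ), and assume Conditions (C1) and (C2) hold. Then for every n ∈ ℕ and every u, v ∈ 𝕃_n = λ_nℤ^d with ‖u−v‖_∞ ≥ 5σ_n λ_n, the events 𝒜^{(n)}_u and 𝒜^{(n)}_v are independent. -/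
open MeasureTheory ProbabilityTheory Set

noncomputable section

lemma lamSeq_pos_aux (lam0 : ℕ) (hlam0 : 0 < lam0) (μ : ℕ → ℕ) (hμ : ∀ n, 0 < μ n) (n : ℕ) :
    0 < lamSeq lam0 μ n := by
  induction n with
  | zero => exact hlam0
  | succ k ih => exact Nat.mul_pos ih (hμ k)

lemma suppBox_mono_aux {d : ℕ} (u v : Fin d → ℤ) (r s : ℕ)
    (h : ∀ i, |(v i - u i : ℤ)| + (r : ℤ) ≤ s) : suppBox v r ⊆ suppBox u s := by
  intro x hx i
  have h1 : |x i - (v i : ℝ)| ≤ r := hx i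
  have h2 : |(v i - u i : ℝ)| + (r : ℝ) ≤ s := by exact_mod_cast h i
  have h3 : |x i - (u i : ℝ)| ≤ |x i - (v i : ℝ)| + |(v i - u i : ℝ)| := abs_sub_le _ _ _
  linarith

lemma measurable_Aev_aux {Ω : Type*} {d : ℕ} (lam0 : ℕ) (μ σ : ℕ → ℕ) (hC1 : Cond1 μ σ)
    (S : RenormScheme Ω d) (D : Set (Fin d → ℝ)) (n : ℕ) :
    ∀ u ∈ latt d (lamSeq lam0 μ n), suppBox u (2 * σ n * lamSeq lam0 μ n) ⊆ D →
      MeasurableSet[MeasurableSpace.generateFrom (schemeEventsIn lam0 μ σ S D)]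
        (Aev lam0 μ σ S n u) := by
  induction n with
  | zero =>
    intro u hu hD
    apply MeasurableSpace.measurableSet_generateFrom
    refine Or.inl ⟨u, hu, rfl, (suppBox_mono_aux u u _ _ ?_).trans hD⟩
    intro i
    simp only [sub_self, abs_zero, zero_add]
    norm_cast
    nlinarith [Nat.zero_le (σ 0 * lamSeq lam0 μ 0)]
  | succ n ih =>
    intro u hu hD
    have key : ∀ w ∈ lamBox lam0 μ (n + 1) u,
        MeasurableSet[MeasurableSpace.generateFrom (schemeEventsIn lam0 μ σ S D)]
        (Aev lam0 μ σ S n w) := by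
      intro w hw
      refine ih w hw.1 ((suppBox_mono_aux u w _ _ ?_).trans hD)
      intro i
      obtain ⟨h1, h2⟩ := hw.2 i
      have h3 : |(w i - u i : ℤ)| ≤ (lamSeq lam0 μ (n + 1) : ℤ) := by
        rw [abs_le]; constructor <;> omega
      have h4 : 2 * σ n * lamSeq lam0 μ n ≤ lamSeq lam0 μ (n + 1) := by
        have : 2 * σ n ≤ μ n := by have := (hC1 n).1; omega
        calc _ ≤ μ n * lamSeq lam0 μ n := Nat.mul_le_mul_right _ this
          _ = _ := Nat.mul_comm _ _
      have h5 : 2 * 2 * lamSeq lam0 μ (n + 1) ≤ 2 * σ (n + 1) * lamSeq lam0 μ (n + 1) :=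
        Nat.mul_le_mul_right _ (Nat.mul_le_mul_left _ (hC1 (n + 1)).2)
      omega
    rw [Aev]
    refine MeasurableSet.inter ?_ ?_
    · apply MeasurableSpace.measurableSet_generateFrom
      refine Or.inr ⟨n + 1, by omega, u, hu, rfl, (suppBox_mono_aux u u _ _ ?_).trans hD⟩
      intro i
      simp only [sub_self, abs_zero, zero_add]
      norm_cast
      nlinarith [Nat.zero_le (σ (n + 1) * lamSeq lam0 μ (n + 1))]
    · refine MeasurableSet.iInter fun u₁ => MeasurableSet.iInter fun u₂ =>
        MeasurableSet.iInter fun h₁ => MeasurableSet.iInter fun h₂ =>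
        MeasurableSet.iInter fun _ => (key u₁ h₁).union (key u₂ h₂)

theorem stmt13 {Ω : Type*} [MeasureSpace Ω] [IsProbabilityMeasure (ℙ : Measure Ω)]
    (d : ℕ) (hd : 2 ≤ d) (lam0 : ℕ) (hlam0 : 0 < lam0) (μ σ : ℕ → ℕ)
    (hμ : ∀ n, 0 < μ n) (hσ : ∀ n, 0 < σ n) (hC1 : Cond1 μ σ)
    (S : RenormScheme Ω d) (hC2 : Cond2 lam0 μ σ S)
    (n : ℕ) (u v : Fin d → ℤ)
    (hu : u ∈ latt d (lamSeq lam0 μ n)) (hv : v ∈ latt d (lamSeq lam0 μ n))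
    (hdist : 5 * σ n * lamSeq lam0 μ n ≤ normInfV (u - v)) :
    ProbabilityTheory.IndepSet (Aev lam0 μ σ S n u) (Aev lam0 μ σ S n v) ℙ := by
  have hpos : 0 < σ n * lamSeq lam0 μ n :=
    Nat.mul_pos (hσ n) (lamSeq_pos_aux lam0 hlam0 μ hμ n)
  have hex : ∃ i, 5 * σ n * lamSeq lam0 μ n ≤ ((u - v) i).natAbs := by
    have hp : 0 < 5 * σ n * lamSeq lam0 μ n := by rw [mul_assoc]; omega
    rw [normInfV, Finset.le_sup_iff (by simpa using hp)] at hdist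
    obtain ⟨i, -, hi⟩ := hdist
    exact ⟨i, hi⟩
  obtain ⟨i, hi⟩ := hex
  have hdisj : Disjoint (suppBox u (2 * σ n * lamSeq lam0 μ n))
      (suppBox v (2 * σ n * lamSeq lam0 μ n)) := by
    rw [Set.disjoint_left]
    intro x hx hy
    have h1 := hx i
    have h2 := hy i
    have h3 : ((5 * σ n * lamSeq lam0 μ n : ℕ) : ℝ) ≤ |(u i : ℝ) - v i| := by
      have : ((5 * σ n * lamSeq lam0 μ n : ℕ) : ℤ) ≤ |u i - v i| := by
        rw [Int.abs_eq_natAbs]; exact_mod_cast hi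
      exact_mod_cast this
    have h4 : |(u i : ℝ) - v i| ≤ |(u i : ℝ) - x i| + |x i - v i| := abs_sub_le _ _ _
    rw [abs_sub_comm (u i : ℝ) (x i)] at h4
    have h5 : (0 : ℝ) < (σ n : ℝ) * lamSeq lam0 μ n := by exact_mod_cast hpos
    push_cast at h1 h2 h3
    nlinarith
  have hI := hC2 _ _ hdisj
  refine indep_of_indep_of_le_left (indep_of_indep_of_le_right hI ?_) ?_
  · apply MeasurableSpace.generateFrom_le
    rintro t rfl
    exact measurable_Aev_aux lam0 μ σ hC1 S _ n v hv subset_rfl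
  · apply MeasurableSpace.generateFrom_le
    rintro t rfl
    exact measurable_Aev_aux lam0 μ σ hC1 S _ n u hu subset_rfl

end
end
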